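/- Let W carry a degree assignment (d_c)_{c∈C} and a combinatorial quasi-fiber structure (g, (m_c), B) of rank r. Assume: (a) p ∤ m_c for every c ∈ C; (b) M_s(δ) = 0 in k for every P ∈ B, every δ ∈ Δ_P and every s ≠ g(φ_P(δ)); (c) Σ_{c∈g^{-1}(s)} d_c·m_c ≡ 0 (mod p) for every s ∈ {1,…,r}; (d) for each s, the restricted combinatorics W°_s is completely p-reductive with respect to ω_𝟙|_s, where 𝟙 = (1,…,1) ∈ k^r. Then ker(·∧ω_𝟙 : A¹ → A²_{W,k}) = R_φ, where ω_𝟙 = Σ_{c∈C} m_c·σ_c; in particular dim_k H¹(A*_{W,k}, ·∧ω_𝟙) = r − 1. (Combinatorial form of the 'moreover' part of Theorem 'p.index', the case of index p.) -/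

import Mathlib

/-!
Modulo the triangle relations, `ψ^a ∧ ψ^b = ψ^a ∧ ψ^o - ψ^b ∧ ψ^o` for any fixed branch `o`, and
these relations are killed by the boundary `ψ^a ∧ ψ^b ↦ ψ^a - ψ^b`. Hence the component of `β ∧ α`
at `P` vanishes iff one linear equation per branch `δ` at `P` holds:
`β_δ · Σ_δ' μ(δ,δ') α_δ' = α_δ · Σ_δ' μ(δ,δ') β_δ'`.

Take `α = ω_a` with all `a_s ≠ 0`. For `β = ω_b` the equations hold: at a base point each sum is a
multiple of `M_{g(δ)}(δ)`, elsewhere `β` is locally proportional to `α`, and the part at infinity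
vanishes because every quasi-fiber has total degree `0` in `k`. Conversely, let `β ∧ α = 0`, and let
`β = l₀ α` and `β = l₁ α` on two classes merged by a reduction step. The equation of the
distinguished branch then reads `α_δ · (l₀ - l₁) · T = 0`, where `T ≠ 0` is the transversality sum,
so `l₀ = l₁`. Complete reductivity therefore makes `β / α` constant on each quasi-fiber.
-/

open scoped Classical

/-- The weak combinatorial type of a plane projective curve. -/
structure WeakComb (p : ℕ) where
  /-- the set of irreducible components -/
  C : Type
  [fintypeC : Fintype C]
  [decEqC : DecidableEq C]
  [nonemptyC : Nonempty C]
  /-- the set of singular points -/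
  S : Type
  [fintypeS : Fintype S]
  [decEqS : DecidableEq S]
  /-- the local branches at each singular point -/
  Δ : S → Type
  [fintypeΔ : ∀ P, Fintype (Δ P)]
  [decEqΔ : ∀ P, DecidableEq (Δ P)]
  /-- each branch belongs to a component -/
  φ : ∀ P, Δ P → C
  /-- local intersection multiplicities of pairs of branches -/
  μ : ∀ P, Δ P → Δ P → ℕ
  μ_symm : ∀ P δ δ', φ P δ ≠ φ P δ' → μ P δ δ' = μ P δ' δ
  μ_pos : ∀ P δ δ', φ P δ ≠ φ P δ' → 0 < μ P δ δ'

attribute [instance] WeakComb.fintypeC WeakComb.decEqC WeakComb.nonemptyC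
attribute [instance] WeakComb.fintypeS WeakComb.decEqS WeakComb.fintypeΔ WeakComb.decEqΔ

namespace WeakComb

variable {p : ℕ} (W : WeakComb p)

/-- μ_P(δ,δ') with the convention that it vanishes on pairs of branches of the same component. -/
def muk (P : W.S) (δ δ' : W.Δ P) : ℕ :=
  if W.φ P δ = W.φ P δ' then 0 else W.μ P δ δ'

/-- μ_P(δ, j): the multiplicity of intersection of the branch δ with the component j. -/
def muC (P : W.S) (δ : W.Δ P) (j : W.C) : ℕ :=
  ∑ δ' : W.Δ P, if W.φ P δ' = j then W.muk P δ δ' else 0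

/-- A degree assignment: positive degrees satisfying the Bezout condition. -/
def IsDegree (d : W.C → ℕ) : Prop :=
  (∀ i, 0 < d i) ∧
  ∀ i j, i ≠ j →
    d i * d j = ∑ P : W.S, ∑ δ : W.Δ P, if W.φ P δ = i then W.muC P δ j else 0

/-- The basis vector σ_i of A¹ = (C → ZMod p). -/
noncomputable def sigma (i : W.C) : W.C → ZMod p := Pi.single i 1

/-- The basis vector ψ_P^δ of A_P = (Δ_P → ZMod p). -/
noncomputable def psi (P : W.S) (δ : W.Δ P) : W.Δ P → ZMod p := Pi.single δ 1

/-- ψ_P^δ ∧ ψ_P^δ' as an element of Λ² A_P. -/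
noncomputable def psiW (P : W.S) (δ δ' : W.Δ P) : ⋀[ZMod p]^2 (W.Δ P → ZMod p) :=
  ⟨ExteriorAlgebra.ιMulti (ZMod p) 2 ![W.psi P δ, W.psi P δ'],
   ExteriorAlgebra.ιMulti_range (ZMod p) 2 (Set.mem_range_self _)⟩

/-- The subspace I_P of Λ² A_P. -/
noncomputable def IP (P : W.S) : Submodule (ZMod p) (⋀[ZMod p]^2 (W.Δ P → ZMod p)) :=
  Submodule.span (ZMod p)
    ({x | ∃ δ1 δ2 δ3 : W.Δ P, x = W.psiW P δ1 δ2 + W.psiW P δ2 δ3 + W.psiW P δ3 δ1} ∪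
     {x | (∀ δ δ' : W.Δ P, W.φ P δ = W.φ P δ') ∧ ∃ δ1 δ2 : W.Δ P, x = W.psiW P δ1 δ2})

/-- The degree-two part A² = A^{2,0} ⊕ A^{2,∞} of the Combinatorial Aomoto algebra. -/
abbrev A2 (d : W.C → ℕ) : Type :=
  ((P : W.S) → (⋀[ZMod p]^2 (W.Δ P → ZMod p)) ⧸ W.IP P) ×
  ({i : W.C // p ∣ d i} → ZMod p)

/-- The wedge product A¹ × A¹ → A², extending σ_i ∧ σ_j bilinearly. -/
noncomputable def wedge (d : W.C → ℕ) (α β : W.C → ZMod p) : W.A2 d :=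
  (fun P => ∑ δ : W.Δ P, ∑ δ' : W.Δ P,
      (α (W.φ P δ) * β (W.φ P δ') * (W.muk P δ δ' : ZMod p)) •
        Submodule.Quotient.mk (W.psiW P δ δ'),
   fun i => α i.1 * (∑ j : W.C, (d j : ZMod p) * β j)
          - β i.1 * (∑ j : W.C, (d j : ZMod p) * α j))

/-- The linear map ·∧α : A¹ → A², β ↦ β ∧ α. -/
noncomputable def wedgeL (d : W.C → ℕ) (α : W.C → ZMod p) :
    (W.C → ZMod p) →ₗ[ZMod p] W.A2 d where
  toFun β := W.wedge d β α
  map_add' β γ := by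
    refine Prod.ext ?_ ?_
    · funext P
      simp only [wedge, Pi.add_apply, Prod.fst_add]
      rw [← Finset.sum_add_distrib]
      refine Finset.sum_congr rfl fun δ _ => ?_
      rw [← Finset.sum_add_distrib]
      refine Finset.sum_congr rfl fun δ' _ => ?_
      rw [← add_smul, add_mul, add_mul]
    · funext i
      simp only [wedge, Pi.add_apply, Prod.snd_add]
      rw [show (∑ x : W.C, (d x : ZMod p) * (β x + γ x))
            = (∑ x : W.C, (d x : ZMod p) * β x) + ∑ x : W.C, (d x : ZMod p) * γ x by
        rw [← Finset.sum_add_distrib]; exact Finset.sum_congr rfl fun x _ => by ring]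
      ring
  map_smul' c β := by
    refine Prod.ext ?_ ?_
    · funext P
      simp only [wedge, Pi.smul_apply, smul_eq_mul, RingHom.id_apply, Prod.smul_fst]
      rw [Finset.smul_sum]
      refine Finset.sum_congr rfl fun δ _ => ?_
      rw [Finset.smul_sum]
      refine Finset.sum_congr rfl fun δ' _ => ?_
      rw [smul_smul]
      ring_nf
    · funext i
      simp only [wedge, Pi.smul_apply, smul_eq_mul, RingHom.id_apply, Prod.smul_snd]
      rw [show (∑ x : W.C, (d x : ZMod p) * (c * β x)) = c * ∑ x : W.C, (d x : ZMod p) * β x by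
        rw [Finset.mul_sum]; exact Finset.sum_congr rfl fun x _ => by ring]
      ring

/-- The kernel of ·∧α : A¹ → A². -/
noncomputable def wedgeKer (d : W.C → ℕ) (α : W.C → ZMod p) :
    Submodule (ZMod p) (W.C → ZMod p) :=
  LinearMap.ker (W.wedgeL d α)

/-- H¹ of the Combinatorial Aomoto complex with differential ·∧α. -/
noncomputable abbrev H1 (d : W.C → ℕ) (α : W.C → ZMod p) :=
  (W.wedgeKer d α) ⧸
    (Submodule.comap (W.wedgeKer d α).subtype (Submodule.span (ZMod p) {α}))

end WeakComb

namespace WeakComb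

variable {p : ℕ} (W : WeakComb p)

/-- The resonance condition for (α,β) at the branch δ of the point P. -/
def ResCond (α β : W.C → ZMod p) (P : W.S) (δ : W.Δ P) : Prop :=
  β (W.φ P δ) * (∑ j : W.C, (W.muC P δ j : ZMod p) * α j)
    - α (W.φ P δ) * (∑ j : W.C, (W.muC P δ j : ZMod p) * β j) = 0

/-- P is a p-transversal point for the pair of components i ≠ j. -/
def PTransPoint (P : W.S) (i j : W.C) : Prop :=
  i ≠ j ∧ (∀ δ : W.Δ P, W.φ P δ = i ∨ W.φ P δ = j) ∧
  (∃ δ : W.Δ P, W.φ P δ = i) ∧ (∃ δ : W.Δ P, W.φ P δ = j) ∧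
  ((∃ δ : W.Δ P, W.φ P δ = i ∧ ((W.muC P δ j : ZMod p) ≠ 0)) ∨
   (∃ δ : W.Δ P, W.φ P δ = j ∧ ((W.muC P δ i : ZMod p) ≠ 0)))

/-- The components i and j are p-transversal at a point. -/
def PTransComponents (i j : W.C) : Prop := ∃ P : W.S, W.PTransPoint P i j

/-- α is non-coordinate if all its coordinates are nonzero. -/
def NonCoordinate (α : W.C → ZMod p) : Prop := ∀ i, α i ≠ 0

end WeakComb

/-- The setoid (partition) obtained from s by merging the classes of c₀ and c₁. -/
def mergeSetoid {α : Type*} (s : Setoid α) (c₀ c₁ : α) : Setoid α :=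
  Relation.EqvGen.setoid (fun a b => s.r a b ∨ (a = c₀ ∧ b = c₁))

namespace WeakComb

variable {p : ℕ} (W : WeakComb p)

/-- W is p-transversal at P with respect to (α, π), where the surjection π is encoded by the
setoid s of its fibres; the two classes π(φ_P(Δ_P)) = {i',j'} are those of c₀ and c₁. -/
def PTransversalAt (α : W.C → ZMod p) (s : Setoid W.C) (P : W.S) (c₀ c₁ : W.C) : Prop :=
  ¬ s.r c₀ c₁ ∧
  (∀ δ : W.Δ P, s.r (W.φ P δ) c₀ ∨ s.r (W.φ P δ) c₁) ∧
  (∃ δ : W.Δ P, s.r (W.φ P δ) c₀) ∧ (∃ δ : W.Δ P, s.r (W.φ P δ) c₁) ∧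
  ∃ δ : W.Δ P, s.r (W.φ P δ) c₀ ∧
    (∑ δ' : W.Δ P, if s.r (W.φ P δ') c₁
        then (W.muk P δ δ' : ZMod p) * α (W.φ P δ') else 0) ≠ 0

/-- A p-reduction step with respect to α. -/
def RedStep (α : W.C → ZMod p) (s s' : Setoid W.C) : Prop :=
  ∃ (P : W.S) (c₀ c₁ : W.C), W.PTransversalAt α s P c₀ c₁ ∧ s' = mergeSetoid s c₀ c₁

/-- W is completely p-reductive with respect to α: starting from the identity partition (⊥),
some finite sequence of p-reduction steps reaches the one-class partition (⊤). -/
def CompletelyPReductive (α : W.C → ZMod p) : Prop :=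
  Relation.ReflTransGen (W.RedStep α) ⊥ ⊤

/-- β is π-proportional to α, for the surjection π encoded by the setoid s: on each class
of s, β is a scalar multiple of α. -/
def Proportional (s : Setoid W.C) (α β : W.C → ZMod p) : Prop :=
  ∀ c : W.C, ∃ l : ZMod p, ∀ c', s.r c c' → β c' = l * α c'

end WeakComb

/-- A combinatorial quasi-fiber structure of rank r on W. -/
structure QuasiFiber {p : ℕ} (W : WeakComb p) (r : ℕ) where
  /-- which quasi-fiber each component belongs to -/
  g : W.C → Fin r
  g_surj : Function.Surjective g
  /-- multiplicities of components inside the quasi-fibers -/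
  m : W.C → ℕ
  m_pos : ∀ c, 0 < m c
  /-- the set of base points -/
  B : Set W.S
  fiber_off_base : ∀ P : W.S, P ∉ B → ∀ δ δ' : W.Δ P, g (W.φ P δ) = g (W.φ P δ')

namespace WeakComb

variable {p : ℕ} (W : WeakComb p) {r : ℕ}

/-- M_s(δ) for a branch δ at a base point P. -/
noncomputable def Mcoef (F : QuasiFiber W r) (P : W.S) (δ : W.Δ P) (s : Fin r) : ZMod p :=
  ∑ δ' : W.Δ P,
    if W.φ P δ' ≠ W.φ P δ ∧ F.g (W.φ P δ') = s
      then ((F.m (W.φ P δ') * W.μ P δ δ' : ℕ) : ZMod p) else 0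

/-- ω_a = Σ_c m_c · a_{g(c)} · σ_c ∈ A¹. -/
noncomputable def omega (F : QuasiFiber W r) (a : Fin r → ZMod p) : W.C → ZMod p :=
  fun c => (F.m c : ZMod p) * a (F.g c)

/-- The restricted combinatorics W°_s of the quasi-fiber s. -/
noncomputable def restrict (F : QuasiFiber W r) (s : Fin r) : WeakComb p where
  C := {c : W.C // F.g c = s}
  fintypeC := Fintype.ofFinite _
  decEqC := inferInstance
  nonemptyC := by obtain ⟨c, hc⟩ := F.g_surj s; exact ⟨⟨c, hc⟩⟩
  S := {P : W.S // Nonempty (W.Δ P) ∧ ∀ δ : W.Δ P, F.g (W.φ P δ) = s}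
  fintypeS := Fintype.ofFinite _
  decEqS := inferInstance
  Δ := fun P => W.Δ P.1
  fintypeΔ := fun P => inferInstance
  decEqΔ := fun P => inferInstance
  φ := fun P δ => ⟨W.φ P.1 δ, P.2.2 δ⟩
  μ := fun P δ δ' => W.μ P.1 δ δ'
  μ_symm := fun P δ δ' h => W.μ_symm P.1 δ δ' (fun e => h (Subtype.ext e))
  μ_pos := fun P δ δ' h => W.μ_pos P.1 δ δ' (fun e => h (Subtype.ext e))

/-- The restriction ω_a|_s of ω_a to the restricted combinatorics W°_s. -/
noncomputable def omegaRes (F : QuasiFiber W r) (a : Fin r → ZMod p) (s : Fin r) :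
    (W.restrict F s).C → ZMod p :=
  fun c => (F.m c.1 : ZMod p) * a s

end WeakComb

/-! ### Finite sums -/

lemma sum_mul_comp_eq_sum_mul_sum_ite {ι κ R : Type*} [Fintype ι] [Fintype κ] [DecidableEq κ]
    [CommSemiring R] (g : ι → κ) (f : ι → R) (b : κ → R) :
    ∑ i, f i * b (g i) = ∑ s, b s * ∑ i, if g i = s then f i else 0 := by
  simp only [Finset.mul_sum]
  rw [Finset.sum_comm]
  simp [mul_comm]

lemma sum_sum_smul_sub_eq_sum_smul {ι R M : Type*} [Fintype ι] [Ring R] [AddCommGroup M]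
    [Module R M] (c : ι → ι → R) (u : ι → M) :
    ∑ i, ∑ j, c i j • (u i - u j) = ∑ i, (∑ j, (c i j - c j i)) • u i := by
  simp only [smul_sub, sub_smul, Finset.sum_smul, Finset.sum_sub_distrib]
  rw [Finset.sum_comm (f := fun i j => c i j • u j)]

/-! ### Wedge products and resonance conditions -/

namespace WeakComb

section Wedge

variable {p : ℕ} (W : WeakComb p)

lemma muk_comm (P : W.S) (δ δ' : W.Δ P) : W.muk P δ δ' = W.muk P δ' δ := by
  simp only [muk, eq_comm (a := W.φ P δ')]
  exact ite_congr rfl (fun _ => rfl) (W.μ_symm P δ δ')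

lemma sum_muC_mul (α : W.C → ZMod p) (P : W.S) (δ : W.Δ P) :
    ∑ j, (W.muC P δ j : ZMod p) * α j = ∑ δ', (W.muk P δ δ' : ZMod p) * α (W.φ P δ') := by
  rw [sum_mul_comp_eq_sum_mul_sum_ite (W.φ P)]
  simp only [muC, Nat.cast_sum, Nat.cast_ite, Nat.cast_zero, mul_comm]

lemma resCond_iff (α β : W.C → ZMod p) (P : W.S) (δ : W.Δ P) :
    W.ResCond α β P δ ↔
      β (W.φ P δ) * ∑ δ', (W.muk P δ δ' : ZMod p) * α (W.φ P δ') =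
        α (W.φ P δ) * ∑ δ', (W.muk P δ δ' : ZMod p) * β (W.φ P δ') := by
  rw [ResCond, sum_muC_mul, sum_muC_mul, sub_eq_zero]

lemma resCond_iff_sum_sub_eq_zero (α β : W.C → ZMod p) (P : W.S) (δ : W.Δ P) :
    W.ResCond α β P δ ↔
      ∑ δ', (β (W.φ P δ) * α (W.φ P δ') * (W.muk P δ δ' : ZMod p) -
        β (W.φ P δ') * α (W.φ P δ) * (W.muk P δ' δ : ZMod p)) = 0 := by
  rw [resCond_iff, ← sub_eq_zero, Finset.mul_sum, Finset.mul_sum, ← Finset.sum_sub_distrib]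
  refine Eq.congr_left (Finset.sum_congr rfl fun δ' _ => ?_)
  rw [W.muk_comm P δ' δ]
  ring

lemma coe_psiW (P : W.S) (δ δ' : W.Δ P) :
    (W.psiW P δ δ' : ExteriorAlgebra (ZMod p) (W.Δ P → ZMod p)) =
      ExteriorAlgebra.ι (ZMod p) (W.psi P δ) * ExteriorAlgebra.ι (ZMod p) (W.psi P δ') := by
  simp [psiW, ExteriorAlgebra.ιMulti_apply]

lemma psiW_swap (P : W.S) (δ δ' : W.Δ P) : W.psiW P δ δ' = -W.psiW P δ' δ := by
  refine Subtype.ext ?_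
  rw [Submodule.coe_neg, coe_psiW, coe_psiW]
  exact eq_neg_of_add_eq_zero_left (ExteriorAlgebra.ι_add_mul_swap _ _)

lemma exists_mk_psiW_eq_sub (P : W.S) : ∃ u : W.Δ P → _ ⧸ W.IP P, ∀ δ δ',
    Submodule.Quotient.mk (W.psiW P δ δ') = u δ - u δ' := by
  rcases isEmpty_or_nonempty (W.Δ P) with _ | ⟨⟨o⟩⟩
  · exact ⟨0, isEmptyElim⟩
  refine ⟨fun δ => Submodule.Quotient.mk (W.psiW P δ o), fun δ δ' => ?_⟩
  rw [← Submodule.Quotient.mk_sub, Submodule.Quotient.eq]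
  refine Submodule.subset_span (Or.inl ⟨δ, δ', o, ?_⟩)
  rw [W.psiW_swap P o δ]
  abel

/-- The boundary `Λ² A_P → A_P`, `ψ^δ ∧ ψ^δ' ↦ ψ^δ - ψ^δ'`, which detects classes modulo `I_P`.
It is encoded as right contraction with the functional taking the value `1` on every `ψ^δ`. -/
noncomputable def boundary (P : W.S) :
    ⋀[ZMod p]^2 (W.Δ P → ZMod p) →ₗ[ZMod p] W.Δ P → ZMod p :=
  ExteriorAlgebra.ιInv ∘ₗ CliffordAlgebra.contractRight.flip (∑ δ, LinearMap.proj δ) ∘ₗ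
    Submodule.subtype _

lemma boundary_psiW (P : W.S) (δ δ' : W.Δ P) :
    W.boundary P (W.psiW P δ δ') = W.psi P δ - W.psi P δ' := by
  have sum_psi (x : W.Δ P) : ∑ i, W.psi P x i = 1 := by simp [psi]
  have contraction : CliffordAlgebra.contractRight
      (W.psiW P δ δ' : ExteriorAlgebra (ZMod p) (W.Δ P → ZMod p)) (∑ i, LinearMap.proj i) =
      ExteriorAlgebra.ι (ZMod p) (W.psi P δ - W.psi P δ') := by
    rw [coe_psiW, CliffordAlgebra.contractRight_mul_ι, CliffordAlgebra.contractRight_ι]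
    simp [LinearMap.sum_apply, sum_psi]
  exact (congrArg ExteriorAlgebra.ιInv contraction).trans (ExteriorAlgebra.ι_leftInverse _)

lemma IP_le_ker_boundary (P : W.S) (hP : ¬ ∀ δ δ' : W.Δ P, W.φ P δ = W.φ P δ') :
    W.IP P ≤ LinearMap.ker (W.boundary P) := by
  refine Submodule.span_le.2 ?_
  rintro x (⟨a, b, c, rfl⟩ | ⟨single, -⟩)
  · simp [boundary_psiW]
  · exact absurd single hP

lemma resCond_of_forall_eq (α β : W.C → ZMod p) {P : W.S}
    (hP : ∀ δ δ' : W.Δ P, W.φ P δ = W.φ P δ') (δ : W.Δ P) : W.ResCond α β P δ := by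
  have muk_eq_zero (δ' : W.Δ P) : W.muk P δ δ' = 0 := if_pos (hP δ δ')
  simp [resCond_iff, muk_eq_zero]

lemma resCond_of_wedge_fst_eq_zero {d : W.C → ℕ} {α β : W.C → ZMod p} {P : W.S}
    (h : (W.wedge d β α).1 P = 0) (δ : W.Δ P) : W.ResCond α β P δ := by
  by_cases hP : ∀ δ δ' : W.Δ P, W.φ P δ = W.φ P δ'
  · exact W.resCond_of_forall_eq α β hP δ
  have boundary_eq_zero := congrArg ((W.IP P).liftQ _ (W.IP_le_ker_boundary P hP)) h
  simp only [wedge, map_sum, map_smul, map_zero, Submodule.liftQ_apply, boundary_psiW]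
    at boundary_eq_zero
  rw [sum_sum_smul_sub_eq_sum_smul] at boundary_eq_zero
  rw [resCond_iff_sum_sub_eq_zero]
  simpa [psi, Pi.single_apply] using congrFun boundary_eq_zero δ

lemma wedge_fst_eq_zero_of_resCond (d : W.C → ℕ) {α β : W.C → ZMod p} {P : W.S}
    (h : ∀ δ, W.ResCond α β P δ) : (W.wedge d β α).1 P = 0 := by
  obtain ⟨u, mk_psiW_eq_sub⟩ := W.exists_mk_psiW_eq_sub P
  simp only [wedge, mk_psiW_eq_sub]
  rw [sum_sum_smul_sub_eq_sum_smul]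
  refine Finset.sum_eq_zero fun δ _ => ?_
  rw [(W.resCond_iff_sum_sub_eq_zero α β P δ).1 (h δ), zero_smul]

lemma wedge_self (d : W.C → ℕ) (α : W.C → ZMod p) : W.wedge d α α = 0 :=
  Prod.ext
    (funext fun _ => W.wedge_fst_eq_zero_of_resCond d fun _ => sub_self _)
    (funext fun _ => sub_self _)

lemma finrank_H1 [Fact p.Prime] (d : W.C → ℕ) {α : W.C → ZMod p} (hα : α ≠ 0) :
    Module.finrank (ZMod p) (W.H1 d α) = Module.finrank (ZMod p) (W.wedgeKer d α) - 1 := by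
  have span_le : Submodule.span (ZMod p) {α} ≤ W.wedgeKer d α :=
    (Submodule.span_singleton_le_iff_mem _ _).2 (W.wedge_self d α)
  rw [Submodule.finrank_quotient, (Submodule.comapSubtypeEquivOfLe span_le).finrank_eq,
    finrank_span_singleton hα]

end Wedge

end WeakComb

/-! ### Reduction steps and proportionality -/

lemma mergeSetoid_le {α : Type*} {s t : Setoid α} {c₀ c₁ : α} (hst : s ≤ t) (h : t c₀ c₁) :
    mergeSetoid s c₀ c₁ ≤ t := by
  refine Setoid.eqvGen_le ?_
  rintro a b (hab | ⟨rfl, rfl⟩)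
  · exact hst hab
  · exact h

namespace WeakComb

section Reduction

variable {p : ℕ} [Fact p.Prime] {W : WeakComb p} {α β : W.C → ZMod p} {s s' : Setoid W.C}

lemma NonCoordinate.proportional_iff_le_ker_div (hα : W.NonCoordinate α) :
    W.Proportional s α β ↔ s ≤ Setoid.ker (β / α) := by
  constructor
  · intro h c c' hcc'
    obtain ⟨l, hl⟩ := h c
    have div_eq {x} (hx : s c x) : (β / α) x = l := by
      rw [Pi.div_apply, hl x hx, mul_div_cancel_right₀ _ (hα x)]
    exact (div_eq (s.refl c)).trans (div_eq hcc').symm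
  · intro h c
    refine ⟨(β / α) c, fun c' hcc' => ?_⟩
    rw [show (β / α) c = (β / α) c' from h hcc', Pi.div_apply, div_mul_cancel₀ _ (hα c')]

lemma PTransversalAt.eq_of_resCond {P : W.S} {c₀ c₁ : W.C} (hP : W.PTransversalAt α s P c₀ c₁)
    (hα : W.NonCoordinate α) (hres : ∀ δ, W.ResCond α β P δ) {l₀ l₁ : ZMod p}
    (h₀ : ∀ c, s.r c c₀ → β c = l₀ * α c) (h₁ : ∀ c, s.r c c₁ → β c = l₁ * α c) : l₀ = l₁ := by
  obtain ⟨-, hcover, -, -, δ, hδ, hsum⟩ := hP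
  have sum_sub : ∑ δ', (W.muk P δ δ' : ZMod p) * β (W.φ P δ') =
      l₀ * ∑ δ', (W.muk P δ δ' : ZMod p) * α (W.φ P δ') -
        (l₀ - l₁) * ∑ δ', if s.r (W.φ P δ') c₁
          then (W.muk P δ δ' : ZMod p) * α (W.φ P δ') else 0 := by
    rw [Finset.mul_sum, Finset.mul_sum, ← Finset.sum_sub_distrib]
    refine Finset.sum_congr rfl fun δ' _ => ?_
    split_ifs with hδ'
    · rw [h₁ _ hδ']
      ring
    · rw [h₀ _ ((hcover δ').resolve_right hδ')]
      ring
  have hδres := (W.resCond_iff α β P δ).1 (hres δ)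
  rw [sum_sub, h₀ _ hδ] at hδres
  have mul_sub_eq_zero : α (W.φ P δ) * (l₀ - l₁) = 0 := by
    refine (mul_eq_zero.1 ?_).resolve_right hsum
    linear_combination hδres
  exact sub_eq_zero.1 ((mul_eq_zero.1 mul_sub_eq_zero).resolve_left (hα _))

lemma Proportional.of_redStep (hs : W.Proportional s α β) (hstep : W.RedStep α s s')
    (hα : W.NonCoordinate α) (hres : ∀ P δ, W.ResCond α β P δ) : W.Proportional s' α β := by
  obtain ⟨P, c₀, c₁, hP, rfl⟩ := hstep
  rw [hα.proportional_iff_le_ker_div] at hs ⊢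
  have eq_ratio_mul (c' c : W.C) (hc : s.r c c') : β c = (β / α) c' * α c := by
    rw [← show (β / α) c = (β / α) c' from hs hc, Pi.div_apply, div_mul_cancel₀ _ (hα c)]
  exact mergeSetoid_le hs
    (hP.eq_of_resCond hα (hres P) (eq_ratio_mul c₀) (eq_ratio_mul c₁))

lemma CompletelyPReductive.exists_eq_smul (hred : W.CompletelyPReductive α)
    (hα : W.NonCoordinate α) (hres : ∀ P δ, W.ResCond α β P δ) : ∃ l : ZMod p, β = l • α := by
  have proportional {s : Setoid W.C} (hs : Relation.ReflTransGen (W.RedStep α) ⊥ s) :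
      W.Proportional s α β := by
    induction hs with
    | refl => exact hα.proportional_iff_le_ker_div.2 bot_le
    | tail _ hstep ih => exact ih.of_redStep hstep hα hres
  obtain ⟨l, hl⟩ := proportional hred (Classical.arbitrary W.C)
  exact ⟨l, funext fun c => hl c trivial⟩

end Reduction

/-! ### Quasi-fibers -/

section QuasiFiber

variable {p : ℕ} (W : WeakComb p) {r : ℕ} (F : QuasiFiber W r)

lemma restrict_muk (s : Fin r) (P : (W.restrict F s).S) (δ δ' : (W.restrict F s).Δ P) :
    (W.restrict F s).muk P δ δ' = W.muk P.1 δ δ' :=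
  if_congr Subtype.ext_iff rfl rfl

lemma ResCond.restrict {α β : W.C → ZMod p} {s : Fin r} {P : (W.restrict F s).S}
    {δ : (W.restrict F s).Δ P} (h : W.ResCond α β P.1 δ) :
    (W.restrict F s).ResCond (fun c => α c.1) (fun c => β c.1) P δ := by
  rw [resCond_iff]
  simp only [restrict_muk]
  exact (W.resCond_iff α β P.1 δ).1 h

lemma exists_eq_mul_of_wedge_eq_zero [Fact p.Prime] {d : W.C → ℕ} {α β : W.C → ZMod p}
    (hα : W.NonCoordinate α)
    (hred : ∀ s, (W.restrict F s).CompletelyPReductive fun c : (W.restrict F s).C => α c.1)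
    (h : W.wedge d β α = 0) : ∃ l : Fin r → ZMod p, ∀ c, β c = l (F.g c) * α c := by
  have hres (P : W.S) (δ : W.Δ P) : W.ResCond α β P δ :=
    W.resCond_of_wedge_fst_eq_zero (congrFun (congrArg Prod.fst h) P) δ
  have proportional_on_fiber (s : Fin r) := (hred s).exists_eq_smul
    (β := fun c : (W.restrict F s).C => β c.1) (fun c => hα c.1) fun P δ => (hres P.1 δ).restrict
  choose l hl using proportional_on_fiber
  exact ⟨l, fun c => congrFun (hl (F.g c)) ⟨c, rfl⟩⟩

lemma sum_muk_mul_omega (b : Fin r → ZMod p) (P : W.S) (δ : W.Δ P) :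
    ∑ δ', (W.muk P δ δ' : ZMod p) * W.omega F b (W.φ P δ') = ∑ s, b s * W.Mcoef F P δ s := by
  simp only [omega, ← mul_assoc]
  rw [sum_mul_comp_eq_sum_mul_sum_ite (fun δ' => F.g (W.φ P δ'))]
  refine Finset.sum_congr rfl fun s _ => congrArg _ (Finset.sum_congr rfl fun δ' _ => ?_)
  by_cases h : W.φ P δ = W.φ P δ'
  · simp [muk, h]
  · simp [muk, h, Ne.symm h, mul_comm]

lemma sum_degree_mul_omega (d : W.C → ℕ) (b : Fin r → ZMod p) :
    ∑ c, (d c : ZMod p) * W.omega F b c =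
      ∑ s, b s * ((∑ c, if F.g c = s then d c * F.m c else 0 : ℕ) : ZMod p) := by
  simp only [omega, ← mul_assoc, sum_mul_comp_eq_sum_mul_sum_ite, Nat.cast_sum, Nat.cast_ite,
    Nat.cast_mul, Nat.cast_zero]

lemma resCond_omega_of_Mcoef_eq_zero {P : W.S} {δ : W.Δ P}
    (hM : ∀ s, s ≠ F.g (W.φ P δ) → W.Mcoef F P δ s = 0) (a b : Fin r → ZMod p) :
    W.ResCond (W.omega F a) (W.omega F b) P δ := by
  have sum_eq_single (x : Fin r → ZMod p) : ∑ s, x s * W.Mcoef F P δ s =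
      x (F.g (W.φ P δ)) * W.Mcoef F P δ (F.g (W.φ P δ)) :=
    Fintype.sum_eq_single _ fun s hs => by rw [hM s hs, mul_zero]
  rw [resCond_iff, sum_muk_mul_omega, sum_muk_mul_omega, sum_eq_single, sum_eq_single]
  simp only [omega]
  ring

lemma resCond_omega_of_forall_g_eq {P : W.S} {δ : W.Δ P}
    (hg : ∀ δ', F.g (W.φ P δ) = F.g (W.φ P δ')) (a b : Fin r → ZMod p) :
    W.ResCond (W.omega F a) (W.omega F b) P δ := by
  rw [resCond_iff, Finset.mul_sum, Finset.mul_sum]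
  refine Finset.sum_congr rfl fun δ' _ => ?_
  simp only [omega, ← hg δ']
  ring

lemma wedge_omega_omega {d : W.C → ℕ}
    (hM : ∀ P ∈ F.B, ∀ δ : W.Δ P, ∀ s, s ≠ F.g (W.φ P δ) → W.Mcoef F P δ s = 0)
    (hD : ∀ s, ((∑ c, if F.g c = s then d c * F.m c else 0 : ℕ) : ZMod p) = 0)
    (a b : Fin r → ZMod p) : W.wedge d (W.omega F b) (W.omega F a) = 0 := by
  refine Prod.ext (funext fun P => W.wedge_fst_eq_zero_of_resCond d fun δ => ?_)
    (funext fun i => ?_)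
  · by_cases hP : P ∈ F.B
    · exact W.resCond_omega_of_Mcoef_eq_zero F (hM P hP δ) a b
    · exact W.resCond_omega_of_forall_g_eq F (F.fiber_off_base P hP δ) a b
  · simp only [wedge, sum_degree_mul_omega, hD, mul_zero, Finset.sum_const_zero, sub_self]
    rfl

/-- The linear map `b ↦ ω_b`, whose range is the space `R_φ`. -/
noncomputable def omegaL : (Fin r → ZMod p) →ₗ[ZMod p] (W.C → ZMod p) :=
  LinearMap.mulLeft (ZMod p) (fun c => (F.m c : ZMod p)) ∘ₗ LinearMap.funLeft (ZMod p) (ZMod p) F.g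

lemma omegaL_apply (b : Fin r → ZMod p) : W.omegaL F b = W.omega F b := rfl

variable [Fact p.Prime] {F}

lemma omegaL_injective (hm : ∀ c, (F.m c : ZMod p) ≠ 0) : Function.Injective (W.omegaL F) := by
  intro a b hab
  funext s
  obtain ⟨c, rfl⟩ := F.g_surj s
  exact mul_left_cancel₀ (hm c) (congrFun hab c)

lemma nonCoordinate_omega (hm : ∀ c, (F.m c : ZMod p) ≠ 0) {a : Fin r → ZMod p}
    (ha : ∀ s, a s ≠ 0) : W.NonCoordinate (W.omega F a) :=
  fun c => mul_ne_zero (hm c) (ha (F.g c))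

lemma exists_eq_omega_of_wedge_eq_zero {d : W.C → ℕ} (hm : ∀ c, (F.m c : ZMod p) ≠ 0)
    {a : Fin r → ZMod p} (ha : ∀ s, a s ≠ 0)
    (hred : ∀ s, (W.restrict F s).CompletelyPReductive (W.omegaRes F a s))
    {η : W.C → ZMod p} (h : W.wedge d η (W.omega F a) = 0) : ∃ b, η = W.omega F b := by
  have omega_restrict (s : Fin r) : W.omegaRes F a s = fun c => W.omega F a c.1 :=
    funext fun c => by rw [omegaRes, omega, c.2]
  obtain ⟨l, hl⟩ := W.exists_eq_mul_of_wedge_eq_zero F (W.nonCoordinate_omega hm ha)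
    (fun s => omega_restrict s ▸ hred s) h
  refine ⟨l * a, funext fun c => ?_⟩
  rw [hl c, omega, omega, Pi.mul_apply, mul_left_comm]

lemma finrank_H1_omega {d : W.C → ℕ} (hm : ∀ c, (F.m c : ZMod p) ≠ 0) {a : Fin r → ZMod p}
    (ha : ∀ s, a s ≠ 0)
    (hker : ∀ η, W.wedge d η (W.omega F a) = 0 ↔ ∃ b, η = W.omega F b) :
    Module.finrank (ZMod p) (W.H1 d (W.omega F a)) = r - 1 := by
  have ker_eq_range : W.wedgeKer d (W.omega F a) = LinearMap.range (W.omegaL F) := by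
    ext η
    exact (hker η).trans (exists_congr fun b => eq_comm)
  have omega_ne_zero : W.omega F a ≠ 0 := fun h =>
    W.nonCoordinate_omega hm ha (Classical.arbitrary W.C) (congrFun h _)
  rw [W.finrank_H1 d omega_ne_zero, ker_eq_range,
    LinearMap.finrank_range_of_inj (W.omegaL_injective hm), Module.finrank_fin_fun]

end QuasiFiber

end WeakComb

section Statements

open WeakComb

variable {p : ℕ} [Fact p.Prime]

theorem stmt14_general (W : WeakComb p) (d : W.C → ℕ) {r : ℕ} (F : QuasiFiber W r)
    {a : Fin r → ZMod p} (ha : ∀ s, a s ≠ 0)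
    (hm : ∀ c : W.C, ¬ p ∣ F.m c)
    (hM : ∀ P ∈ F.B, ∀ δ : W.Δ P, ∀ s : Fin r,
      s ≠ F.g (W.φ P δ) → W.Mcoef F P δ s = 0)
    (hD : ∀ s : Fin r,
      ((∑ c : W.C, if F.g c = s then d c * F.m c else 0 : ℕ) : ZMod p) = 0)
    (hred : ∀ s : Fin r, (W.restrict F s).CompletelyPReductive (W.omegaRes F a s)) :
    (∀ η : W.C → ZMod p,
      W.wedge d η (W.omega F a) = 0 ↔ ∃ b : Fin r → ZMod p, η = W.omega F b) ∧
    Module.finrank (ZMod p) (W.H1 d (W.omega F a)) = r - 1 := by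
  have m_ne_zero (c : W.C) : (F.m c : ZMod p) ≠ 0 := by
    simpa only [ne_eq, ZMod.natCast_eq_zero_iff] using hm c
  have hker (η : W.C → ZMod p) :
      W.wedge d η (W.omega F a) = 0 ↔ ∃ b : Fin r → ZMod p, η = W.omega F b := by
    refine ⟨W.exists_eq_omega_of_wedge_eq_zero m_ne_zero ha hred, ?_⟩
    rintro ⟨b, rfl⟩
    exact W.wedge_omega_omega F hM hD a b
  exact ⟨hker, W.finrank_H1_omega m_ne_zero ha hker⟩

/-- Theorem `p.index`, `moreover` part: index p. -/
theorem stmt14 (W : WeakComb p) (d : W.C → ℕ) (hd : W.IsDegree d)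
    {r : ℕ} (F : QuasiFiber W r)
    (hm : ∀ c : W.C, ¬ p ∣ F.m c)
    (hM : ∀ P ∈ F.B, ∀ δ : W.Δ P, ∀ s : Fin r,
      s ≠ F.g (W.φ P δ) → W.Mcoef F P δ s = 0)
    (hD : ∀ s : Fin r,
      ((∑ c : W.C, if F.g c = s then d c * F.m c else 0 : ℕ) : ZMod p) = 0)
    (hred : ∀ s : Fin r,
      (W.restrict F s).CompletelyPReductive
        (W.omegaRes F (fun _ => 1) s)) :
    (∀ η : W.C → ZMod p,
      W.wedge d η (W.omega F fun _ => 1) = 0 ↔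
        ∃ b : Fin r → ZMod p, η = W.omega F b) ∧
    Module.finrank (ZMod p) (W.H1 d (W.omega F fun _ => 1)) = r - 1 := by
  exact stmt14_general W d F (fun _ => one_ne_zero) hm hM hD hred

end Statements
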